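/- An R-module M is Gorenstein (L,A)-projective if and only if there exists a Hom_R(−,𝓛)-exact exact sequence 0 → M → G₋₁ → G₋₂ → ⋯ with every Gᵢ Gorenstein (L,A)-projective and Extⁱ_R(M, L) = 0 for every L ∈ 𝓛 and every i ≥ 1. -/

import Mathlib

/-!
A kernel `K` in a totally acyclic complex satisfies `Ext^i(K, L) = 0` for `i ≥ 1` by dimension
shifting (`IsGProj.acyc`), so a Gorenstein projective module `M` has the trivial coresolution
`0 → M → M → 0 → ⋯`.

Conversely, let `Z n` be the cosyzygies of the given coresolution, with `Z 0 = M`. They are all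
acyclic against `𝓛`, because the coresolution is `Hom(-, 𝓛)`-exact (`Acyc.right`). By
`isGProj_of_coinduction` it suffices to find a class of acyclic modules which contains `M` and whose
members embed in projective modules with cokernel in the class. The class `IterExt` of finite iterated
extensions of the `Z n` by Gorenstein projective modules works (`IterExt.cosyzygy`):

* composing `Z n → G n` with an embedding of `G n` into a projective `P` whose cokernel `G'` is
  Gorenstein projective, one gets `0 → Z (n + 1) → P / Z n → G' → 0`;
* for `0 → X → Y → G → 0`, embeddings of `X` and `G` into projectives `P` and `Q` combine to an
  embedding of `Y` into `P ⊞ Q`, because `X → P` extends to `Y`. This uses that projective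
  modules belong to `𝓛`, so that `Ext^1(G, P) = 0`. The cokernels again form a short exact sequence.

Working with this class makes it unnecessary to know beforehand that Gorenstein projective modules
are closed under extensions.
-/

open CategoryTheory CategoryTheory.Limits DirectSum

namespace DualityPaper

variable {R : Type} [Ring R]

/-- The right `R`-module structure on the group of additive maps out of a left `R`-module,
given by `(f • r) m = f (r • m)`. -/
instance charModuleRight (M A : Type) [AddCommGroup M] [AddCommGroup A] [Module R M] :
    Module Rᵐᵒᵖ (M →+ A) where
  smul r f := f.comp (DistribMulAction.toAddMonoidHom M r.unop)
  one_smul f := AddMonoidHom.ext fun m => by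
    show f ((1 : Rᵐᵒᵖ).unop • m) = f m
    simp
  mul_smul r s f := AddMonoidHom.ext fun m => by
    show f ((r * s).unop • m) = f (s.unop • r.unop • m)
    rw [MulOpposite.unop_mul, mul_smul]
  smul_zero r := rfl
  smul_add r f g := rfl
  add_smul r s f := AddMonoidHom.ext fun m => by
    show f ((r + s).unop • m) = f (r.unop • m) + f (s.unop • m)
    rw [MulOpposite.unop_add, add_smul, map_add]
  zero_smul f := AddMonoidHom.ext fun m => by
    show f ((0 : Rᵐᵒᵖ).unop • m) = 0
    simp

/-- The left `R`-module structure on the group of additive maps out of a right `R`-module. -/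
instance charModuleLeft (N A : Type) [AddCommGroup N] [AddCommGroup A] [Module Rᵐᵒᵖ N] :
    Module R (N →+ A) where
  smul r f := f.comp (DistribMulAction.toAddMonoidHom N (MulOpposite.op r))
  one_smul f := AddMonoidHom.ext fun m => by
    show f ((MulOpposite.op (1 : R)) • m) = f m
    simp
  mul_smul r s f := AddMonoidHom.ext fun m => by
    show f (MulOpposite.op (r * s) • m) = f (MulOpposite.op s • MulOpposite.op r • m)
    rw [MulOpposite.op_mul, mul_smul]
  smul_zero r := rfl
  smul_add r f g := rfl
  add_smul r s f := AddMonoidHom.ext fun m => by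
    show f (MulOpposite.op (r + s) • m) = f (MulOpposite.op r • m) + f (MulOpposite.op s • m)
    rw [MulOpposite.op_add, add_smul, map_add]
  zero_smul f := AddMonoidHom.ext fun m => by
    show f (MulOpposite.op (0 : R) • m) = 0
    simp

/-- The character module `M⁺ = Hom_ℤ(M, ℚ/ℤ)` of a left module, as a right module. -/
def charL (M : ModuleCat.{0} R) : ModuleCat.{0} Rᵐᵒᵖ :=
  ModuleCat.of Rᵐᵒᵖ (M →+ AddCircle (1 : ℚ))

/-- The character module `N⁺ = Hom_ℤ(N, ℚ/ℤ)` of a right module, as a left module. -/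
def charR (N : ModuleCat.{0} Rᵐᵒᵖ) : ModuleCat.{0} R :=
  ModuleCat.of R (N →+ AddCircle (1 : ℚ))

/-- A left module over a (possibly noncommutative) ring is flat iff its character module is an
injective right module (Lambek); we take this as the definition of flatness. -/
def IsFlatMod (M : ModuleCat.{0} R) : Prop := CategoryTheory.Injective (charL M)

/-- `f`, `g` form a short exact sequence `0 → A → B → C → 0`. -/
def SES {A B C : ModuleCat.{0} R} (f : A ⟶ B) (g : B ⟶ C) : Prop :=
  ∃ w : f ≫ g = 0, (ShortComplex.mk f g w).ShortExact

/-- Vanishing of `Ext^n_R(M, N)`. -/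
def ExtVanish (n : ℕ) (M N : ModuleCat.{0} R) : Prop :=
  Subsingleton (((_root_.Ext ℤ (ModuleCat.{0} R) n).obj (Opposite.op M)).obj N)

/-- A complete duality pair `(𝓛, 𝓐)` over `R`. -/
structure CompleteDualityPair (𝓛 : Set (ModuleCat.{0} R)) (𝓐 : Set (ModuleCat.{0} Rᵐᵒᵖ)) :
    Prop where
  isoClosed_L : ∀ {M N : ModuleCat.{0} R}, (M ≅ N) → M ∈ 𝓛 → N ∈ 𝓛
  isoClosed_A : ∀ {M N : ModuleCat.{0} Rᵐᵒᵖ}, (M ≅ N) → M ∈ 𝓐 → N ∈ 𝓐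
  char_mem_iff : ∀ M : ModuleCat.{0} R, M ∈ 𝓛 ↔ charL M ∈ 𝓐
  char_mem_iff' : ∀ N : ModuleCat.{0} Rᵐᵒᵖ, N ∈ 𝓐 ↔ charR N ∈ 𝓛
  summands_A : ∀ A ∈ 𝓐, ∀ (B : ModuleCat.{0} Rᵐᵒᵖ) (i : B ⟶ A) (p : A ⟶ B),
    i ≫ p = 𝟙 B → B ∈ 𝓐
  sums_A : ∀ A B : ModuleCat.{0} Rᵐᵒᵖ, A ∈ 𝓐 → B ∈ 𝓐 → ModuleCat.of Rᵐᵒᵖ (A × B) ∈ 𝓐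
  summands_L : ∀ L ∈ 𝓛, ∀ (K : ModuleCat.{0} R) (i : K ⟶ L) (p : L ⟶ K),
    i ≫ p = 𝟙 K → K ∈ 𝓛
  sums_L : ∀ L K : ModuleCat.{0} R, L ∈ 𝓛 → K ∈ 𝓛 → ModuleCat.of R (L × K) ∈ 𝓛
  self_mem : ModuleCat.of R R ∈ 𝓛
  coprod_L : ∀ (ι : Type) (f : ι → ModuleCat.{0} R), (∀ i, f i ∈ 𝓛) →
    ModuleCat.of R (⨁ i, f i) ∈ 𝓛
  ext_L : ∀ {A B C : ModuleCat.{0} R} (f : A ⟶ B) (g : B ⟶ C),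
    SES f g → A ∈ 𝓛 → C ∈ 𝓛 → B ∈ 𝓛

/-- A doubly infinite exact sequence of projectives which stays exact after applying
`Hom_R(-, T)` for every `T` in the class `𝓣`. -/
structure IsTotallyAcyclicWrt (𝓣 : Set (ModuleCat.{0} R))
    (C : ChainComplex (ModuleCat.{0} R) ℤ) : Prop where
  projective : ∀ n, Projective (C.X n)
  exact : ∀ n, (C.sc n).Exact
  homExact : ∀ T ∈ 𝓣, ∀ (n : ℤ) (g : C.X n ⟶ T), C.d (n + 1) n ≫ g = 0 →
    ∃ h : C.X (n - 1) ⟶ T, C.d n (n - 1) ≫ h = g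

/-- `M` is Gorenstein projective relative to the class `𝓣`:  it is a kernel in a
`Hom_R(-, 𝓣)`-exact exact sequence of projective modules. -/
def IsGProj (𝓣 : Set (ModuleCat.{0} R)) (M : ModuleCat.{0} R) : Prop :=
  ∃ C : ChainComplex (ModuleCat.{0} R) ℤ, IsTotallyAcyclicWrt 𝓣 C ∧
    ∃ n : ℤ, Nonempty (M ≅ kernel (C.d n (n - 1)))

/-- `M` is strongly Gorenstein `(𝓛,𝓐)`-projective. -/
def IsSGProj (𝓣 : Set (ModuleCat.{0} R)) (M : ModuleCat.{0} R) : Prop :=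
  ∃ (P : ModuleCat.{0} R) (f : P ⟶ P), Projective P ∧
    (∃ w : f ≫ f = 0, (ShortComplex.mk f f w).Exact) ∧
    (∀ T ∈ 𝓣, ∀ g : P ⟶ T, f ≫ g = 0 → ∃ h : P ⟶ T, f ≫ h = g) ∧
    Nonempty (M ≅ kernel f)

/-- Resolution dimension of `M` with respect to a class `𝓒` is at most `n`. -/
def ResDimLE (𝓒 : Set (ModuleCat.{0} R)) : ℕ → ModuleCat.{0} R → Prop
  | 0, M => M ∈ 𝓒
  | n + 1, M => ∃ (K C : ModuleCat.{0} R) (f : K ⟶ C) (g : C ⟶ M),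
      C ∈ 𝓒 ∧ SES f g ∧ ResDimLE 𝓒 n K

/-- `K` is an `n`-th kernel of an exact sequence `0 → K → C_{n-1} → ⋯ → C₀ → M → 0`
with all `Cᵢ` in `𝓒`. -/
def IsNthSyzygy (𝓒 : Set (ModuleCat.{0} R)) : ℕ → ModuleCat.{0} R → ModuleCat.{0} R → Prop
  | 0, M, K => Nonempty (K ≅ M)
  | n + 1, M, K => ∃ (S C : ModuleCat.{0} R) (f : S ⟶ C) (g : C ⟶ M),
      C ∈ 𝓒 ∧ SES f g ∧ IsNthSyzygy 𝓒 n S K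

/-- A left Frobenius pair `(𝓧, ω)`. -/
structure LeftFrobeniusPair (𝓧 ω : Set (ModuleCat.{0} R)) : Prop where
  summands_X : ∀ X ∈ 𝓧, ∀ (Y : ModuleCat.{0} R) (i : Y ⟶ X) (p : X ⟶ Y),
    i ≫ p = 𝟙 Y → Y ∈ 𝓧
  extensions_X : ∀ {A B C : ModuleCat.{0} R} (f : A ⟶ B) (g : B ⟶ C),
    SES f g → A ∈ 𝓧 → C ∈ 𝓧 → B ∈ 𝓧
  kerEpi_X : ∀ {A B C : ModuleCat.{0} R} (f : A ⟶ B) (g : B ⟶ C),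
    SES f g → B ∈ 𝓧 → C ∈ 𝓧 → A ∈ 𝓧
  subset : ω ⊆ 𝓧
  inj : ∀ X ∈ 𝓧, ∀ W ∈ ω, ∀ i : ℕ, 1 ≤ i → ExtVanish i X W
  cogen : ∀ X ∈ 𝓧, ∃ (W X' : ModuleCat.{0} R) (f : X ⟶ W) (g : W ⟶ X'),
    W ∈ ω ∧ X' ∈ 𝓧 ∧ SES f g
  summands_ω : ∀ W ∈ ω, ∀ (V : ModuleCat.{0} R) (i : V ⟶ W) (p : W ⟶ V),
    i ≫ p = 𝟙 V → V ∈ ω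

/-! ### Acyclicity against `𝓛` -/

theorem ses_iff {A B C : ModuleCat.{0} R} (f : A ⟶ B) (g : B ⟶ C) :
    SES f g ↔ Function.Injective f ∧ Function.Surjective g ∧ Function.Exact f g := by
  constructor
  · rintro ⟨w, h⟩
    exact ⟨h.moduleCat_injective_f, h.moduleCat_surjective_g,
      (ShortComplex.ShortExact.moduleCat_exact_iff_function_exact _).1 h.exact⟩
  · rintro ⟨hf, hg, h⟩
    have w : f ≫ g = 0 := by
      ext x
      exact h.apply_apply_eq_zero x
    have := (ModuleCat.mono_iff_injective f).2 hf
    have := (ModuleCat.epi_iff_surjective g).2 hg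
    exact ⟨w, ⟨(ShortComplex.ShortExact.moduleCat_exact_iff_function_exact _).2 h⟩⟩

/-- `M` is acyclic against `𝓛`: `Ext^i(M, L) = 0` for all `L ∈ 𝓛` and `i ≥ 1`. It is phrased with
`Abelian.Ext`, for which long exact sequences are available. -/
def Acyc (𝓛 : Set (ModuleCat.{0} R)) (M : ModuleCat.{0} R) : Prop :=
  ∀ L ∈ 𝓛, ∀ i : ℕ, Subsingleton (Abelian.Ext.{0} M L (i + 1))

/-- `Ext^(n+1)` in its derived-functor form, read off from a projective resolution. -/
theorem extVanish_iff {M L : ModuleCat.{0} R} (P : ProjectiveResolution M) (n : ℕ) :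
    ExtVanish (n + 1) M L ↔ ∀ f : P.complex.X (n + 1) ⟶ L, P.complex.d (n + 2) (n + 1) ≫ f = 0 →
      ∃ g : P.complex.X n ⟶ L, P.complex.d (n + 1) n ≫ g = f := by
  unfold ExtVanish
  rw [← ModuleCat.isZero_iff_subsingleton, (P.isoExt (R := ℤ) (n + 1) L).isZero_iff,
    ← HomologicalComplex.exactAt_iff_isZero_homology,
    HomologicalComplex.exactAt_iff' _ n (n + 1) (n + 2) (by simp) (by simp),
    ShortComplex.moduleCat_exact_iff]
  rfl

/-- The two models of `Ext` in Mathlib vanish simultaneously, since a projective resolution computes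
both by the same cocycles and coboundaries. -/
theorem extVanish_iff_subsingleton (M L : ModuleCat.{0} R) (n : ℕ) :
    ExtVanish (n + 1) M L ↔ Subsingleton (Abelian.Ext.{0} M L (n + 1)) := by
  let P : ProjectiveResolution M := ProjectiveResolution.of M
  rw [extVanish_iff P]
  constructor
  · intro h
    refine subsingleton_of_forall_eq 0 fun α => ?_
    obtain ⟨f, hf, rfl⟩ := P.extMk_surjective α (n + 2) rfl
    exact (P.extMk_eq_zero_iff f (n + 2) rfl hf n rfl).2 (h f hf)
  · intro h f hf
    exact (P.extMk_eq_zero_iff f (n + 2) rfl hf n rfl).1 (Subsingleton.elim _ _)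

section

variable {𝓛 : Set (ModuleCat.{0} R)} {A B C : ModuleCat.{0} R} {f : A ⟶ B} {g : B ⟶ C}

theorem acyc_iff {M : ModuleCat.{0} R} :
    Acyc 𝓛 M ↔ ∀ L ∈ 𝓛, ∀ i : ℕ, 1 ≤ i → ExtVanish i M L := by
  constructor
  · rintro h L hL (_ | i) hi
    · omega
    · exact (extVanish_iff_subsingleton _ _ _).2 (h L hL i)
  · intro h L hL i
    exact (extVanish_iff_subsingleton _ _ _).1 (h L hL (i + 1) (by omega))

theorem acyc_of_projective (M : ModuleCat.{0} R) [Projective M] : Acyc 𝓛 M :=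
  fun L _ i => Abelian.Ext.subsingleton_of_projective M L i

theorem Acyc.middle (h : SES f g) (hA : Acyc 𝓛 A) (hC : Acyc 𝓛 C) : Acyc 𝓛 B := by
  obtain ⟨w, h⟩ := h
  intro L hL i
  refine subsingleton_of_forall_eq 0 fun x => ?_
  have := hA L hL i
  have := hC L hL i
  obtain ⟨y, rfl⟩ := Abelian.Ext.contravariant_sequence_exact₂ h L x
    (Subsingleton.elim (α := Abelian.Ext.{0} A L (i + 1)) _ _)
  rw [show y = 0 from Subsingleton.elim (α := Abelian.Ext.{0} C L (i + 1)) _ _]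
  simp

theorem Acyc.left (h : SES f g) (hB : Acyc 𝓛 B) (hC : Acyc 𝓛 C) : Acyc 𝓛 A := by
  obtain ⟨w, h⟩ := h
  intro L hL i
  refine subsingleton_of_forall_eq 0 fun x => ?_
  have := hB L hL i
  have := hC L hL (i + 1)
  obtain ⟨y, rfl⟩ := Abelian.Ext.contravariant_sequence_exact₁ h L x (n₁ := i + 1 + 1) (by omega)
    (Subsingleton.elim (α := Abelian.Ext.{0} C L (i + 1 + 1)) _ _)
  rw [show y = 0 from Subsingleton.elim (α := Abelian.Ext.{0} B L (i + 1)) _ _]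
  simp

/-- `Ext^1(C, L) = 0` allows maps into `L` to be extended from `A` to `B`. -/
theorem Acyc.hom_surj (h : SES f g) (hC : Acyc 𝓛 C) {L : ModuleCat.{0} R} (hL : L ∈ 𝓛)
    (u : A ⟶ L) : ∃ v : B ⟶ L, f ≫ v = u := by
  obtain ⟨w, h⟩ := h
  have := hC L hL 0
  obtain ⟨y, hy⟩ := Abelian.Ext.contravariant_sequence_exact₁ h L (.mk₀ u) (n₁ := 1) rfl
    (Subsingleton.elim (α := Abelian.Ext.{0} C L (0 + 1)) _ _)
  obtain ⟨v, rfl⟩ := (Abelian.Ext.mk₀_bijective _ _).2 y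
  rw [Abelian.Ext.mk₀_comp_mk₀] at hy
  exact ⟨v, (Abelian.Ext.mk₀_bijective _ _).1 hy⟩

/-- Converse of the extension property: if `Ext^1(B, L) = 0` and maps into `L` extend from `A` to `B`,
then `Ext^1(C, L) = 0`. -/
theorem ext_one_of_hom_surj {L : ModuleCat.{0} R} (h : SES f g)
    (hB : Subsingleton (Abelian.Ext.{0} B L 1))
    (hs : ∀ u : A ⟶ L, ∃ v : B ⟶ L, f ≫ v = u) : Subsingleton (Abelian.Ext.{0} C L 1) := by
  obtain ⟨w, h⟩ := h
  refine subsingleton_of_forall_eq 0 fun x => ?_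
  obtain ⟨y, rfl⟩ := Abelian.Ext.contravariant_sequence_exact₃ h L x
    (Subsingleton.elim (α := Abelian.Ext.{0} B L 1) _ _) (n₀ := 0) rfl
  obtain ⟨u, rfl⟩ := (Abelian.Ext.mk₀_bijective _ _).2 y
  obtain ⟨v, rfl⟩ := hs u
  rw [← Abelian.Ext.mk₀_comp_mk₀]
  exact h.extClass_comp_assoc _ 

/-- Dimension shifting. -/
theorem ext_succ_of_left {L : ModuleCat.{0} R} {n : ℕ} (h : SES f g)
    (hB : Subsingleton (Abelian.Ext.{0} B L (n + 1)))
    (hA : Subsingleton (Abelian.Ext.{0} A L n)) : Subsingleton (Abelian.Ext.{0} C L (n + 1)) := by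
  obtain ⟨w, h⟩ := h
  refine subsingleton_of_forall_eq 0 fun x => ?_
  obtain ⟨y, rfl⟩ := Abelian.Ext.contravariant_sequence_exact₃ h L x
    (Subsingleton.elim (α := Abelian.Ext.{0} B L (n + 1)) _ _) (n₀ := n) (by omega)
  rw [show y = 0 from Subsingleton.elim (α := Abelian.Ext.{0} A L n) _ _]
  simp

/-- Acyclicity passes to the cokernel of an inclusion which is `Hom(-, 𝓛)`-exact. -/
theorem Acyc.right (h : SES f g) (hA : Acyc 𝓛 A) (hB : Acyc 𝓛 B)
    (hs : ∀ L ∈ 𝓛, ∀ u : A ⟶ L, ∃ v : B ⟶ L, f ≫ v = u) : Acyc 𝓛 C := by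
  rintro L hL (_ | i)
  · exact ext_one_of_hom_surj h (hB L hL 0) (hs L hL)
  · exact ext_succ_of_left h (hB L hL (i + 1)) (hA L hL i)

end

/-! ### Diagram chases -/

theorem SES.desc {A B C D : ModuleCat.{0} R} {f : A ⟶ B} {g : B ⟶ C} (h : SES f g) (k : B ⟶ D)
    (hk : f ≫ k = 0) : ∃ k' : C ⟶ D, g ≫ k' = k := by
  obtain ⟨w, h⟩ := h
  have := h.epi_g
  exact ⟨h.exact.desc k hk, h.exact.g_desc k hk⟩

/-- The `3 × 3` lemma: given a morphism of short exact sequences whose outer components are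
monomorphisms with cokernels `C₁` and `C₃`, the middle component is a monomorphism whose cokernel is
an extension of `C₃` by `C₁`. -/
theorem three_by_three {A₁ A₂ A₃ B₁ B₂ B₃ C₁ C₃ : ModuleCat.{0} R}
    {a : A₁ ⟶ A₂} {a' : A₂ ⟶ A₃} {b : B₁ ⟶ B₂} {b' : B₂ ⟶ B₃}
    {u₁ : A₁ ⟶ B₁} {u₂ : A₂ ⟶ B₂} {u₃ : A₃ ⟶ B₃} {v₁ : B₁ ⟶ C₁} {v₃ : B₃ ⟶ C₃}
    (ha : SES a a') (hb : SES b b') (h₁ : SES u₁ v₁) (h₃ : SES u₃ v₃)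
    (comm : a ≫ u₂ = u₁ ≫ b) (comm' : a' ≫ u₃ = u₂ ≫ b') :
    ∃ (C₂ : ModuleCat.{0} R) (v₂ : B₂ ⟶ C₂) (c : C₁ ⟶ C₂) (c' : C₂ ⟶ C₃),
      SES u₂ v₂ ∧ SES c c' := by
  have e (x : A₁) : u₂ (a x) = b (u₁ x) := congr($comm x)
  have e' (x : A₂) : u₃ (a' x) = b' (u₂ x) := congr($comm' x)
  obtain ⟨ia, sa, ea⟩ := (ses_iff _ _).1 ha
  obtain ⟨ib, sb, eb⟩ := (ses_iff _ _).1 hb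
  obtain ⟨i₁, s₁, e₁⟩ := (ses_iff _ _).1 h₁
  obtain ⟨i₃, s₃, e₃⟩ := (ses_iff _ _).1 h₃
  have i₂ : Function.Injective u₂ := by
    rw [injective_iff_map_eq_zero]
    intro x hx
    have : a' x = 0 := i₃ (by rw [e', hx, map_zero, map_zero])
    obtain ⟨y, rfl⟩ := (ea x).1 this
    rw [e] at hx
    have : u₁ y = 0 := ib (by rw [hx, map_zero])
    rw [show y = 0 from i₁ (by rw [this, map_zero]), map_zero]
  let C₂ : ModuleCat.{0} R := ModuleCat.of R (B₂ ⧸ LinearMap.range u₂.hom)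
  let v₂ : B₂ ⟶ C₂ := ModuleCat.ofHom (LinearMap.range u₂.hom).mkQ
  have s₂ : Function.Surjective v₂ := Submodule.mkQ_surjective _
  have e₂ : Function.Exact u₂ v₂ := by
    intro x
    exact (Submodule.Quotient.mk_eq_zero _).trans Iff.rfl
  have h₂ : SES u₂ v₂ := (ses_iff _ _).2 ⟨i₂, s₂, e₂⟩
  obtain ⟨w₁, -⟩ := id h₁
  obtain ⟨w₂, -⟩ := id h₂
  obtain ⟨w₃, -⟩ := id h₃
  obtain ⟨c, hc⟩ := h₁.desc (b ≫ v₂) (by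
    rw [← Category.assoc, ← comm, Category.assoc, w₂, comp_zero])
  obtain ⟨c', hc'⟩ := h₂.desc (b' ≫ v₃) (by
    rw [← Category.assoc, ← comm', Category.assoc, w₃, comp_zero])
  have f (x : B₁) : c (v₁ x) = v₂ (b x) := congr($hc x)
  have f' (x : B₂) : c' (v₂ x) = v₃ (b' x) := congr($hc' x)
  refine ⟨C₂, v₂, c, c', h₂, (ses_iff _ _).2 ⟨?_, ?_, ?_⟩⟩
  · rw [injective_iff_map_eq_zero]
    intro x hx
    obtain ⟨y, rfl⟩ := s₁ x
    rw [f] at hx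
    obtain ⟨z, hz⟩ := (e₂ _).1 hx
    have : a' z = 0 := i₃ (by rw [e', hz, map_zero, eb.apply_apply_eq_zero])
    obtain ⟨t, rfl⟩ := (ea z).1 this
    rw [e] at hz
    rw [← ib hz, e₁.apply_apply_eq_zero]
  · intro x
    obtain ⟨y, rfl⟩ := s₃ x
    obtain ⟨z, rfl⟩ := sb y
    exact ⟨v₂ z, f' z⟩
  · intro x
    constructor
    · intro hx
      obtain ⟨y, rfl⟩ := s₂ x
      rw [f'] at hx
      obtain ⟨z, hz⟩ := (e₃ _).1 hx
      obtain ⟨t, rfl⟩ := sa z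
      rw [e'] at hz
      have : b' (y - u₂ t) = 0 := by rw [map_sub, hz, sub_self]
      obtain ⟨s, hs⟩ := (eb _).1 this
      refine ⟨v₁ s, ?_⟩
      rw [f, hs, map_sub, e₂.apply_apply_eq_zero, sub_zero]
    · rintro ⟨y, rfl⟩
      obtain ⟨z, rfl⟩ := s₁ y
      rw [f, f', eb.apply_apply_eq_zero, map_zero]

/-! ### Assembling totally acyclic complexes -/

/-- `X` is a first syzygy of `Y`: there is a short exact sequence `0 → X → P → Y → 0` with `P`
projective. -/
def IsSyzygy (X Y : ModuleCat.{0} R) : Prop :=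
  ∃ (P : ModuleCat.{0} R) (i : X ⟶ P) (p : P ⟶ Y), Projective P ∧ SES i p

theorem Acyc.exists_isSyzygy {𝓛 : Set (ModuleCat.{0} R)} {X : ModuleCat.{0} R} (hX : Acyc 𝓛 X) :
    ∃ Y, Acyc 𝓛 Y ∧ IsSyzygy Y X := by
  have h : SES (kernel.ι (Projective.π X)) (Projective.π X) :=
    ⟨kernel.condition _, { exact := ShortComplex.exact_kernel _ }⟩
  exact ⟨_, Acyc.left h (acyc_of_projective _) hX, _, _, _, inferInstance, h⟩

/-- Dependent choice inside the predicate `p`. -/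
theorem exists_seq {α : Type*} {p : α → Prop} {r : α → α → Prop}
    (h : ∀ x, p x → ∃ y, p y ∧ r x y) {x : α} (hx : p x) :
    ∃ a : ℕ → α, a 0 = x ∧ ∀ n, p (a n) ∧ r (a n) (a (n + 1)) := by
  choose! g hg using h
  have hp : ∀ n, p (g^[n] x) := by
    intro n
    induction n with
    | zero => exact hx
    | succ n ih => rw [Function.iterate_succ_apply']; exact (hg _ ih).1
  refine ⟨fun n => g^[n] x, rfl, fun n => ⟨hp n, ?_⟩⟩
  simp only [Function.iterate_succ_apply']
  exact (hg _ (hp n)).2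

/-- Splicing short exact sequences `0 → K (n + 1) → P n → K n → 0` with all `K n` acyclic gives a
totally acyclic complex, so every `K n` is Gorenstein projective. -/
theorem isGProj_of_int_seq {𝓛 : Set (ModuleCat.{0} R)} (K : ℤ → ModuleCat.{0} R)
    (hK : ∀ n, Acyc 𝓛 (K n)) (hs : ∀ n, IsSyzygy (K (n + 1)) (K n)) (n₀ : ℤ) :
    IsGProj 𝓛 (K n₀) := by
  choose P i p hP h using hs
  have hw (n) : i n ≫ p n = 0 := (h n).1
  have hi (n) : Mono (i n) := (h n).2.mono_f
  have hp (n) : Epi (p n) := (h n).2.epi_g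
  let C : ChainComplex (ModuleCat.{0} R) ℤ := ChainComplex.of P (fun n => p (n + 1) ≫ i n)
    (fun n => by rw [Category.assoc, ← Category.assoc (i (n + 1)), hw, zero_comp, comp_zero])
  have hd (n : ℤ) : C.d (n + 1) n = p (n + 1) ≫ i n 
    := ChainComplex.of_d P (fun n => p (n + 1) ≫ i n) n
  have hk (n m : ℤ) (hnm : m + 1 = n) : Nonempty (K (n + 1) ≅ kernel (C.d n m)) := by
    subst hnm
    rw [hd]
    exact ⟨(IsLimit.conePointUniqueUpToIso (h (m + 1)).2.fIsKernel (kernelIsKernel _)) ≪≫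
      (kernelCompMono (p (m + 1)) (i m)).symm⟩
  refine ⟨C, ⟨hP, fun n => ?_, fun T hT n g hg => ?_⟩, n₀ - 1, ?_⟩
  · obtain ⟨m, rfl⟩ : ∃ m, n = m + 1 := ⟨n - 1, by ring⟩
    refine (HomologicalComplex.exactAt_iff' C (m + 1 + 1) (m + 1) m (by simp) (by simp)).2 ?_
    rw [ShortComplex.ShortExact.moduleCat_exact_iff_function_exact]
    intro x
    have hx : C.d (m + 1) m x = i m (p (m + 1) x) := congr($(hd m) x)
    have hx' (y) : C.d (m + 1 + 1) (m + 1) y = i (m + 1) (p (m + 1 + 1) y) :=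
      congr($(hd (m + 1)) y)
    change C.d (m + 1) m x = 0 ↔ ∃ y, C.d (m + 1 + 1) (m + 1) y = x
    rw [hx]
    have i₁ := ((ses_iff _ _).1 (h m)).1
    have s₁ := ((ses_iff _ _).1 (h (m + 1 + 1))).2.1
    have e₁ := ((ses_iff _ _).1 (h (m + 1))).2.2
    rw [map_eq_zero_iff _ i₁, e₁ x]
    constructor
    · rintro ⟨y, rfl⟩
      obtain ⟨z, rfl⟩ := s₁ y
      exact ⟨z, hx' z⟩
    · rintro ⟨y, rfl⟩
      exact ⟨_, (hx' y).symm⟩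
  · have key : ∀ m : ℤ, m + 1 = n → ∃ h : C.X m ⟶ T, C.d n m ≫ h = g := by
      rintro m rfl
      rw [hd, Category.assoc] at hg
      have hg' : i (m + 1) ≫ g = 0 := by
        rw [← cancel_epi (p (m + 1 + 1)), hg, comp_zero]
      obtain ⟨k, hk⟩ := (h (m + 1)).desc g hg'
      obtain ⟨l, hl⟩ := Acyc.hom_surj (h m) (hK m) hT k
      exact ⟨l, by rw [hd, Category.assoc, hl, hk]⟩
    exact key (n - 1) (by ring)
  · have := hk (n₀ - 1) (n₀ - 1 - 1) (by ring)
    rwa [sub_add_cancel] at this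

/-- A class of acyclic modules, each of which embeds in a projective module with cokernel again in
the class, consists of Gorenstein projective modules. The right half of the complex comes from these
embeddings, the left half from a projective resolution. -/
theorem isGProj_of_coinduction {𝓛 : Set (ModuleCat.{0} R)} (W : Set (ModuleCat.{0} R))
    (hW : ∀ X ∈ W, Acyc 𝓛 X ∧ ∃ Y ∈ W, IsSyzygy X Y) {M : ModuleCat.{0} R} (hM : M ∈ W) :
    IsGProj 𝓛 M := by
  obtain ⟨a, ha, ha'⟩ := exists_seq (p := Acyc 𝓛) (r := fun X Y => IsSyzygy Y X)
    (fun X hX => hX.exists_isSyzygy) (hW M hM).1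
  obtain ⟨b, hb, hb'⟩ := exists_seq (p := (· ∈ W)) (r := IsSyzygy)
    (fun X hX => (hW X hX).2) hM
  let K : ℤ → ModuleCat.{0} R
    | .ofNat n => a n
    | .negSucc n => b (n + 1)
  have h0 : K 0 = M := ha
  rw [← h0]
  apply isGProj_of_int_seq
  · rintro (n | n)
    · exact (ha' n).1
    · exact (hW _ (hb' (n + 1)).1).1
  · rintro (n | _ | n)
    · exact (ha' n).2
    · change IsSyzygy (a 0) (b 1)
      rw [ha, ← hb]
      exact (hb' 0).2
    · exact (hb' (n + 1)).2

/-! ### Kernels in a totally acyclic complex -/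

section

variable {𝓛 : Set (ModuleCat.{0} R)} {C : ChainComplex (ModuleCat.{0} R) ℤ}

theorem IsTotallyAcyclicWrt.ses (hC : IsTotallyAcyclicWrt 𝓛 C) {n m p : ℤ} (hnm : m + 1 = n)
    (hmp : p + 1 = m) :
    SES (kernel.ι (C.d n m)) (kernel.lift (C.d m p) (C.d n m) (C.d_comp_d _ _ _)) := by
  have e := (HomologicalComplex.exactAt_iff' C n m p (by simp [hnm]) (by simp [← hmp])).1
    (hC.exact m)
  have : Epi (kernel.lift (C.d m p) (C.d n m) (C.d_comp_d _ _ _)) := e.epi_kernelLift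
  have w : kernel.ι (C.d n m) ≫ kernel.lift (C.d m p) (C.d n m) (C.d_comp_d _ _ _) = 0 := by
    rw [← cancel_mono (kernel.ι _)]
    simp
  refine ⟨w, { exact := ?_ }⟩
  let φ : ShortComplex.mk _ _ w ⟶ ShortComplex.mk _ _ (kernel.condition (C.d n m)) :=
    { τ₁ := 𝟙 _, τ₂ := 𝟙 _, τ₃ := kernel.ι _ }
  have : Epi φ.τ₁ := inferInstanceAs (Epi (𝟙 _))
  have : IsIso φ.τ₂ := inferInstanceAs (IsIso (𝟙 _))
  have : Mono φ.τ₃ := inferInstanceAs (Mono (kernel.ι _))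
  exact (ShortComplex.exact_iff_of_epi_of_isIso_of_mono φ).2 (ShortComplex.exact_kernel _)

/-- Maps into `L` extend from each kernel to the projective module containing it. -/
theorem IsTotallyAcyclicWrt.hom_surj (hC : IsTotallyAcyclicWrt 𝓛 C) {n m : ℤ} (hnm : m + 1 = n)
    {L : ModuleCat.{0} R} (hL : L ∈ 𝓛) (u : kernel (C.d n m) ⟶ L) :
    ∃ v : C.X n ⟶ L, kernel.ι (C.d n m) ≫ v = u := by
  obtain ⟨w, h⟩ := hC.ses (n := n + 1) rfl hnm
  have := h.epi_g
  -- `homExact` is indexed by `n + 1 - 1`, which is not syntactically `n`.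
  have key : ∀ k, k = n → ∀ g : C.X (n + 1) ⟶ L, C.d (n + 1 + 1) (n + 1) ≫ g = 0 →
      ∃ h : C.X k ⟶ L, C.d (n + 1) k ≫ h = g := by
    intro k hk
    obtain rfl : k = n + 1 - 1 := by omega
    exact hC.homExact L hL (n + 1)
  obtain ⟨v, hv⟩ := key n rfl (kernel.lift (C.d n m) (C.d (n + 1) n) (C.d_comp_d _ _ _) ≫ u) (by
    have : C.d (n + 1 + 1) (n + 1) ≫
        kernel.lift (C.d n m) (C.d (n + 1) n) (C.d_comp_d _ _ _) = 0 := by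
      rw [← cancel_mono (kernel.ι _)]
      simp
    rw [← Category.assoc, this, zero_comp])
  refine ⟨v, ?_⟩
  rw [← cancel_epi (kernel.lift (C.d n m) (C.d (n + 1) n) (C.d_comp_d _ _ _)), ← hv]
  simp

theorem IsTotallyAcyclicWrt.acyc_kernel (hC : IsTotallyAcyclicWrt 𝓛 C) {n m : ℤ}
    (hnm : m + 1 = n) : Acyc 𝓛 (kernel (C.d n m)) := by
  intro L hL i
  have hX (k j) : Subsingleton (Abelian.Ext.{0} (C.X k) L (j + 1)) := by
    have := hC.projective k
    exact Abelian.Ext.subsingleton_of_projective _ _ _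
  induction i generalizing n m with
  | zero => exact ext_one_of_hom_surj (hC.ses rfl hnm) (hX _ _) (hC.hom_surj rfl hL)
  | succ i ih => exact ext_succ_of_left (hC.ses rfl hnm) (hX _ _) (ih rfl)

end

theorem SES.of_iso {A A' B C : ModuleCat.{0} R} {f : A ⟶ B} {g : B ⟶ C} (h : SES f g)
    (e : A' ≅ A) : SES (e.hom ≫ f) g := by
  obtain ⟨w, h⟩ := h
  have w' : (e.hom ≫ f) ≫ g = 0 := by rw [Category.assoc, w, comp_zero]
  let E : ShortComplex.mk _ _ w' ≅ ShortComplex.mk _ _ w :=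
    ShortComplex.isoMk e (Iso.refl _) (Iso.refl _) (by simp) (by simp)
  exact ⟨w', ShortComplex.shortExact_of_iso E.symm h⟩

theorem IsGProj.cosyzygy {𝓛 : Set (ModuleCat.{0} R)} {M : ModuleCat.{0} R} (h : IsGProj 𝓛 M) :
    ∃ N, IsGProj 𝓛 N ∧ IsSyzygy M N := by
  obtain ⟨C, hC, n, ⟨e⟩⟩ := h
  exact ⟨kernel (C.d (n - 1) (n - 1 - 1)), ⟨C, hC, n - 1, ⟨Iso.refl _⟩⟩, C.X n, _, _,
    hC.projective n, (hC.ses (by omega) (by omega)).of_iso e⟩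

theorem IsGProj.acyc {𝓛 : Set (ModuleCat.{0} R)} {M : ModuleCat.{0} R} (h : IsGProj 𝓛 M) :
    Acyc 𝓛 M := by
  obtain ⟨C, hC, n, ⟨e⟩⟩ := h
  have := hC.projective n
  exact Acyc.left ((hC.ses (n := n) (m := n - 1) (p := n - 1 - 1) (by omega)
    (by omega)).of_iso e)
    (acyc_of_projective _) (hC.acyc_kernel (m := n - 1 - 1) (by omega))

theorem isGProj_of_isZero {𝓛 : Set (ModuleCat.{0} R)} {Z : ModuleCat.{0} R} (hZ : IsZero Z) :
    IsGProj 𝓛 Z := by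
  have : Projective Z := hZ.projective
  refine isGProj_of_coinduction {Z} (fun X hX => ?_) rfl
  obtain rfl : X = Z := hX
  refine ⟨acyc_of_projective _, X, rfl, X, 0, 0, this, ?_⟩
  have := ModuleCat.subsingleton_of_isZero hZ
  exact (ses_iff _ _).2 ⟨fun _ _ _ => Subsingleton.elim _ _,
    fun x => ⟨x, Subsingleton.elim _ _⟩, fun x => ⟨fun _ => ⟨x, Subsingleton.elim _ _⟩,
    fun _ => Subsingleton.elim _ _⟩⟩

/-! ### Iterated extensions by Gorenstein projective modules -/

/-- `𝓛` contains `R` and is closed under direct sums and summands, hence contains all projective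
modules. -/
theorem CompleteDualityPair.projective_mem {𝓛 : Set (ModuleCat.{0} R)}
    {𝓐 : Set (ModuleCat.{0} Rᵐᵒᵖ)} (h : CompleteDualityPair 𝓛 𝓐) (P : ModuleCat.{0} R)
    [Projective P] : P ∈ 𝓛 := by
  classical
  let F : ModuleCat.{0} R := ModuleCat.of R (⨁ _ : P, ModuleCat.of R R)
  have hF : F ∈ 𝓛 := h.coprod_L P (fun _ => ModuleCat.of R R) fun _ => h.self_mem
  let q : F ⟶ P := ModuleCat.ofHom
    (DirectSum.toModule R P P fun x => LinearMap.toSpanSingleton R P x)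
  have hq : Epi q := by
    rw [ModuleCat.epi_iff_surjective]
    intro x
    refine ⟨DirectSum.lof R P (fun _ => ModuleCat.of R R) x (1 : R), ?_⟩
    refine (DirectSum.toModule_lof R
      (φ := fun x => LinearMap.toSpanSingleton R P x) x (1 : R)).trans ?_
    exact one_smul R x
  exact h.summands_L F hF P (Projective.factorThru (𝟙 P) q) q (Projective.factorThru_comp _ _)

/-- Modules obtained from members of `W` by finitely many successive extensions
`0 → X → Y → G → 0` with `G` Gorenstein projective. -/
inductive IterExt (𝓛 W : Set (ModuleCat.{0} R)) : ModuleCat.{0} R → Prop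
  | base {X : ModuleCat.{0} R} (hX : X ∈ W) : IterExt 𝓛 W X
  | step {X Y G : ModuleCat.{0} R} {f : X ⟶ Y} {g : Y ⟶ G} (h : SES f g)
      (hX : IterExt 𝓛 W X) (hG : IsGProj 𝓛 G) : IterExt 𝓛 W Y

theorem IterExt.acyc {𝓛 W : Set (ModuleCat.{0} R)} (hW : ∀ X ∈ W, Acyc 𝓛 X)
    {X : ModuleCat.{0} R} (hX : IterExt 𝓛 W X) : Acyc 𝓛 X := by
  induction hX with
  | base hX => exact hW _ hX
  | step h _ hG ih => exact Acyc.middle h ih hG.acyc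

theorem SES.biprod (P Q : ModuleCat.{0} R) :
    SES (biprod.inl : P ⟶ P ⊞ Q) (biprod.snd : P ⊞ Q ⟶ Q) :=
  ⟨biprod.inl_snd, (ShortComplex.Splitting.ofHasBinaryBiproduct P Q).shortExact⟩

/-- If each member of `W` embeds in a Gorenstein projective module with cokernel in `W`, then each
iterated extension embeds in a projective module whose cokernel is again an iterated extension. -/
theorem IterExt.cosyzygy {𝓛 W : Set (ModuleCat.{0} R)}
    (hP : ∀ P : ModuleCat.{0} R, Projective P → P ∈ 𝓛)
    (hW : ∀ X ∈ W, ∃ (G Y : ModuleCat.{0} R) (f : X ⟶ G) (g : G ⟶ Y),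
      IsGProj 𝓛 G ∧ Y ∈ W ∧ SES f g)
    {X : ModuleCat.{0} R} (hX : IterExt 𝓛 W X) :
    ∃ Y, IterExt 𝓛 W Y ∧ IsSyzygy X Y := by
  induction hX with
  | @base X hX =>
    obtain ⟨G, Y, f, g, hG, hY, h⟩ := hW X hX
    obtain ⟨G', hG', P, i, p, hP', h'⟩ := hG.cosyzygy
    -- The `3 × 3` lemma for the rows `X → X → 0` and `G → P → G'` gives `0 → Y → P / X → G' → 0`.
    let O : ModuleCat.{0} R := ModuleCat.of R PUnit
    have h₁ : SES (𝟙 X) (0 : X ⟶ O) := (ses_iff _ _).2 ⟨fun _ _ h => h,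
      fun x => ⟨0, Subsingleton.elim (α := PUnit) _ _⟩,
      fun x => ⟨fun _ => ⟨x, rfl⟩, fun _ => rfl⟩⟩
    have h₃ : SES (0 : O ⟶ G') (𝟙 G') := (ses_iff _ _).2
      ⟨fun x y _ => Subsingleton.elim (α := PUnit) x y, fun x => ⟨x, rfl⟩,
      fun x => ⟨fun h => ⟨0, h.symm⟩, fun ⟨_, h⟩ => h.symm⟩⟩
    obtain ⟨N, v, c, c', hv, hc⟩ := three_by_three (u₂ := f ≫ i) h₁ h' h h₃ (by simp)
      (by simp [h'.1])
    exact ⟨N, .step hc (.base hY) hG', P, _, _, hP', hv⟩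
  | @step X Y G f g h hX hG ih =>
    obtain ⟨X', hX', P, i, p, hPP, hi⟩ := ih
    obtain ⟨G', hG', Q, j, q, hQ, hj⟩ := hG.cosyzygy
    -- Horseshoe: `X → P` extends to `Y` because `P ∈ 𝓛` and `Ext^1(G, P) = 0`.
    obtain ⟨k, hk⟩ := Acyc.hom_surj h hG.acyc (hP P hPP) i
    obtain ⟨Y', v, c, c', hv, hc⟩ := three_by_three (u₂ := biprod.lift k (g ≫ j)) h
      (SES.biprod P Q) hi hj (by
        have w : f ≫ g = 0 := h.1
        refine biprod.hom_ext _ _ ?_ ?_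
        · simp [hk]
        · simp [reassoc_of% w]) (by simp)
    exact ⟨Y', .step hc hX' hG', P ⊞ Q, _, _, inferInstance, hv⟩

/-! ### Cosyzygies of the given coresolution -/

theorem ses_cokernel {A B C : ModuleCat.{0} R} {f : A ⟶ B} {g : B ⟶ C} {w : f ≫ g = 0}
    (h : (ShortComplex.mk f g w).Exact) : SES (cokernel.desc f g w) (cokernel.π g) := by
  have : Mono (cokernel.desc f g w) := h.mono_cokernelDesc
  have w' : cokernel.desc f g w ≫ cokernel.π g = 0 := by
    rw [← cancel_epi (cokernel.π f)]
    simp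
  refine ⟨w', { exact := ?_ }⟩
  let φ : ShortComplex.mk _ _ (cokernel.condition g) ⟶ ShortComplex.mk _ _ w' :=
    { τ₁ := cokernel.π f, τ₂ := 𝟙 _, τ₃ := 𝟙 _ }
  have : Epi φ.τ₁ := inferInstanceAs (Epi (cokernel.π f))
  have : IsIso φ.τ₂ := inferInstanceAs (IsIso (𝟙 _))
  have : Mono φ.τ₃ := inferInstanceAs (Mono (𝟙 _))
  exact (ShortComplex.exact_iff_of_epi_of_isIso_of_mono φ).1 (ShortComplex.exact_cokernel _)

theorem cokernel_hom_surj {A B C L : ModuleCat.{0} R} {f : A ⟶ B} {g : B ⟶ C} (w : f ≫ g = 0)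
    (h : ∀ u : B ⟶ L, f ≫ u = 0 → ∃ v : C ⟶ L, g ≫ v = u) (u : cokernel f ⟶ L) :
    ∃ v : C ⟶ L, cokernel.desc f g w ≫ v = u := by
  obtain ⟨v, hv⟩ := h (cokernel.π f ≫ u) (by simp)
  refine ⟨v, ?_⟩
  rw [← cancel_epi (cokernel.π f), ← hv]
  simp

theorem stmt2
    (R : Type) [Ring R] (𝓛 : Set (ModuleCat.{0} R)) (𝓐 : Set (ModuleCat.{0} Rᵐᵒᵖ))
    (hdp : CompleteDualityPair 𝓛 𝓐) (M : ModuleCat.{0} R) :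
    IsGProj 𝓛 M ↔
      ((∃ (G : ℕ → ModuleCat.{0} R) (d : ∀ n, G n ⟶ G (n + 1)) (ι : M ⟶ G 0),
          (∀ n, IsGProj 𝓛 (G n)) ∧
          Mono ι ∧
          (∃ w : ι ≫ d 0 = 0, (ShortComplex.mk ι (d 0) w).Exact) ∧
          (∀ n, ∃ w : d n ≫ d (n + 1) = 0, (ShortComplex.mk (d n) (d (n + 1)) w).Exact) ∧
          (∀ L ∈ 𝓛,
            (∀ g : M ⟶ L, ∃ h : G 0 ⟶ L, ι ≫ h = g) ∧
            (∀ g : G 0 ⟶ L, ι ≫ g = 0 → ∃ h : G 1 ⟶ L, d 0 ≫ h = g) ∧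
            (∀ (n : ℕ) (g : G (n + 1) ⟶ L), d n ≫ g = 0 →
              ∃ h : G (n + 2) ⟶ L, d (n + 1) ≫ h = g))) ∧
        (∀ L ∈ 𝓛, ∀ i : ℕ, 1 ≤ i → ExtVanish i M L)) := by
  constructor
  · intro hM
    -- `M` is its own coresolution: `0 → M → M → 0 → 0 → ⋯`.
    let O : ModuleCat.{0} R := ModuleCat.of R PUnit
    have hO : IsZero O := ModuleCat.isZero_of_subsingleton _
    let G : ℕ → ModuleCat.{0} R
      | 0 => M
      | _ + 1 => O
    refine ⟨⟨G, fun _ => 0, 𝟙 M, ?_, inferInstance, ⟨comp_zero, ?_⟩, fun n => ⟨comp_zero, ?_⟩,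
      fun L _ => ⟨fun g => ⟨g, Category.id_comp _⟩, fun g hg => ⟨0, ?_⟩, fun n g _ => ⟨0, ?_⟩⟩⟩,
      acyc_iff.1 hM.acyc⟩
    · rintro (_ | n)
      · exact hM
      · exact isGProj_of_isZero hO
    · exact (ShortComplex.exact_iff_epi _ rfl).2 (inferInstanceAs (Epi (𝟙 M)))
    · exact ShortComplex.exact_of_isZero_X₂ _ hO
    · rw [Category.id_comp] at hg
      rw [comp_zero, hg]
    · exact hO.eq_of_src _ _
  · rintro ⟨⟨G, d, ι, hG, hι, ⟨w₀, e₀⟩, he, hL⟩, hM⟩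
    choose w e using he
    -- `Z n` is the `n`-th cosyzygy of the coresolution, so that `0 → Z n → G n → Z (n + 1) → 0`.
    let Z : ℕ → ModuleCat.{0} R
      | 0 => M
      | 1 => cokernel ι
      | n + 2 => cokernel (d n)
    have hZ : ∀ n, ∃ (f : Z n ⟶ G n) (g : G n ⟶ Z (n + 1)), SES f g ∧
        ∀ L ∈ 𝓛, ∀ u : Z n ⟶ L, ∃ v : G n ⟶ L, f ≫ v = u := by
      rintro (_ | _ | n)
      · exact ⟨ι, cokernel.π ι, ⟨cokernel.condition _, { exact := ShortComplex.exact_cokernel _ }⟩,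
          fun L h => (hL L h).1⟩
      · exact ⟨_, _, ses_cokernel e₀, fun L h => cokernel_hom_surj w₀ (hL L h).2.1⟩
      · exact ⟨_, _, ses_cokernel (e n), fun L h => cokernel_hom_surj (w n) ((hL L h).2.2 n)⟩
    have hZa : ∀ n, Acyc 𝓛 (Z n) := by
      intro n
      induction n with
      | zero => exact acyc_iff.2 hM
      | succ n ih =>
        obtain ⟨f, g, h, hs⟩ := hZ n
        exact Acyc.right h ih (hG n).acyc hs
    have hW : ∀ X ∈ Set.range Z, ∃ (G Y : ModuleCat.{0} R) (f : X ⟶ G) (g : G ⟶ Y),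
        IsGProj 𝓛 G ∧ Y ∈ Set.range Z ∧ SES f g := by
      rintro _ ⟨n, rfl⟩
      obtain ⟨f, g, h, -⟩ := hZ n
      exact ⟨G n, Z (n + 1), f, g, hG n, ⟨n + 1, rfl⟩, h⟩
    refine isGProj_of_coinduction {X | IterExt 𝓛 (Set.range Z) X} (fun X hX => ⟨?_, ?_⟩)
      (IterExt.base ⟨0, rfl⟩)
    · exact IterExt.acyc (by rintro _ ⟨n, rfl⟩; exact hZa n) hX
    · exact IterExt.cosyzygy (fun P _ => hdp.projective_mem P) hW hX

end DualityPaper
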